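/- Let F be an algebraically closed field, let r ≥ 1, and let f ∈ F[x₁,…,xₙ] be a polynomial whose constant term is zero, such that the Krull dimension of F[x₁,…,xₙ]/I_r(f) is strictly less than n − (r+1)², where I_r(f) is the ideal generated by all partial derivatives of f of order at most r (including f itself). Then for every determinantal representation M of f of size s, the rank of the constant part M(0) satisfies s − r ≤ rank M(0) ≤ s − 1; in other words, M is r′-regular for some r′ ≤ r. -/

import Mathlib

/-!
Suppose that `M(0)` has rank less than `s - r`, and consider the locus where `M` has rank less than
`s - r`. It contains the origin, and all derivatives of `f = det M` of order at most `r` vanish on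
it: differentiating a determinant replaces one column at a time, and changing `r` columns raises the
rank by at most `r` (`iterPderiv_det_eq_zero`). So any minimal prime `P` of the ideal of
`(s - r)`-minors of `M` contains `I_r(f)`, and one exists because this ideal is contained in the
ideal of the origin.

By the Eagon–Northcott bound (`height_le_of_mem_minimalPrimes_minorIdeal`) the height of `P` is at
most `(r + 1)²`. Its proof is by induction on the size of the minors. If an entry of the matrix is
not in `P`, it serves as a pivot and the matrix is replaced by its Schur complement. If all entries
are in `P`, the variable `X` is added to one entry over `A[X]`: Krull's principal ideal theorem
shows that `P A[X]` is still a minimal prime of the ideal of minors, and it does not contain the new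
entry. Minors of size one are covered by Krull's height theorem.

Finally `n ≤ ht P + dim F[x]/P` (`exists_injective_algHom_quotient` and
`natCast_le_ringKrullDim_of_injective`), so `dim F[x]/I_r(f) ≥ n - (r + 1)²`, contrary to the
hypothesis. The upper bound on the rank says that `det M(0) = f(0) = 0`.
-/

open MvPolynomial Matrix

/-- The iterated partial derivative of `g` with respect to the (not necessarily distinct)
variables listed in `l`. -/
noncomputable def iterPderiv {F : Type*} [Field F] {σ : Type*}
    (l : List σ) (g : MvPolynomial σ F) : MvPolynomial σ F :=
  l.foldl (fun h v => MvPolynomial.pderiv v h) g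

/-! ### Ideals of minors and ranks -/

/-- The ideal generated by the `t × t` minors of `M`. The row and column choices range over all
functions rather than increasing ones; this only adds zeros and signed repetitions. -/
def minorIdeal {A : Type*} [CommRing A] {m n : Type*} (t : ℕ) (M : Matrix m n A) : Ideal A :=
  Ideal.span (Set.range fun e : (Fin t → m) × (Fin t → n) => (M.submatrix e.1 e.2).det)

theorem exists_submatrix_det_ne_zero {K : Type*} [Field K] {s t : ℕ}
    (N : Matrix (Fin s) (Fin s) K) (ht : t ≤ N.rank) :
    ∃ (a b : Fin t → Fin s), (N.submatrix a b).det ≠ 0 := by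
  have key : ∀ {p : ℕ} (L : Matrix (Fin p) (Fin s) K), t ≤ L.rank →
      ∃ b : Fin t → Fin s, LinearIndependent K (L.submatrix id b).col := by
    intro p L hL
    obtain ⟨g, hg, -, hgi⟩ := Submodule.exists_fun_fin_finrank_span_eq K (Set.range L.col)
    rw [Matrix.rank_eq_finrank_span_cols] at hL
    choose b hb using hg
    refine ⟨fun i => b (Fin.castLE hL i), ?_⟩
    have : (L.submatrix id fun i => b (Fin.castLE hL i)).col = g ∘ Fin.castLE hL := by
      funext i
      exact hb _
    rw [this]
    exact hgi.comp _ (Fin.castLE_injective hL)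
  obtain ⟨b, hb⟩ := key N ht
  have h2 : t ≤ (N.submatrix id b)ᵀ.rank := by
    rw [LinearIndependent.rank_matrix (M := (N.submatrix id b)ᵀ) hb]
    simp
  obtain ⟨a, ha⟩ := key _ h2
  refine ⟨a, b, ?_⟩
  have : (N.submatrix a b).row = ((N.submatrix id b)ᵀ.submatrix id a).col := rfl
  rw [← this, Matrix.linearIndependent_rows_iff_isUnit, Matrix.isUnit_iff_isUnit_det] at ha
  exact ha.ne_zero

/-- The ideal of `(k + 1)`-minors dies in a field exactly when the image matrix has rank at
most `k`. This allows containments of determinantal ideals in primes to be proved by linear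
algebra. -/
theorem minorIdeal_le_ker_iff {A K : Type*} [CommRing A] [Field K] (φ : A →+* K) {s : ℕ} (k : ℕ)
    (M : Matrix (Fin s) (Fin s) A) :
    minorIdeal (k + 1) M ≤ RingHom.ker φ ↔ (M.map φ).rank ≤ k := by
  rw [minorIdeal, Ideal.span_le]
  constructor
  · intro h
    by_contra! hk
    obtain ⟨a, b, hab⟩ := exists_submatrix_det_ne_zero _ (Nat.succ_le_of_lt hk)
    apply hab
    have := h ⟨(a, b), rfl⟩
    rw [SetLike.mem_coe, RingHom.mem_ker, RingHom.map_det] at this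
    exact this
  · rintro h _ ⟨⟨a, b⟩, rfl⟩
    rw [SetLike.mem_coe, RingHom.mem_ker, RingHom.map_det]
    by_contra h0
    have h1 := Matrix.rank_of_det_ne_zero h0
    have h2 := Matrix.rank_submatrix_le (M.map φ) a b
    rw [Matrix.submatrix_map] at h2
    rw [RingHom.mapMatrix_apply, Fintype.card_fin] at h1
    exact absurd (h1.symm.le.trans (h2.trans h)) (by simp)

/-- The Schur complement of the entry `(i₀, j₀)`, multiplied by that entry so that no division
is needed. -/
def pivotComplement {A : Type*} [CommRing A] {s : ℕ} (M : Matrix (Fin (s + 1)) (Fin (s + 1)) A)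
    (i₀ j₀ : Fin (s + 1)) : Matrix (Fin s) (Fin s) A :=
  Matrix.of fun i j => M i₀ j₀ * M (i₀.succAbove i) (j₀.succAbove j)
    - M (i₀.succAbove i) j₀ * M i₀ (j₀.succAbove j)

theorem rank_pivotComplement {K : Type*} [Field K] {s : ℕ}
    (M : Matrix (Fin (s + 1)) (Fin (s + 1)) K) (i₀ j₀ : Fin (s + 1)) (h : M i₀ j₀ ≠ 0) :
    M.rank = (pivotComplement M i₀ j₀).rank + 1 := by
  set N := pivotComplement M i₀ j₀ with hN
  have hM := LinearMap.finrank_range_add_finrank_ker M.mulVecLin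
  have hN' := LinearMap.finrank_range_add_finrank_ker N.mulVecLin
  -- Row `i` of `N` is row `i` of `M`, cleared of its `j₀`-th coefficient by means of row `i₀`.
  have hrel : ∀ (v : Fin (s + 1) → K) (i : Fin s),
      (N *ᵥ (fun j => v (j₀.succAbove j))) i =
        M i₀ j₀ * (M *ᵥ v) (i₀.succAbove i) - M (i₀.succAbove i) j₀ * (M *ᵥ v) i₀ := by
    intro v i
    simp only [Matrix.mulVec, dotProduct, Fin.sum_univ_succAbove _ j₀, hN, pivotComplement,
      Matrix.of_apply, mul_add, Finset.mul_sum]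
    rw [add_sub_add_comm, ← Finset.sum_sub_distrib,
      show ∀ a b c : K, a * (b * c) - b * (a * c) = 0 from fun a b c => by ring, zero_add]
    exact Finset.sum_congr rfl fun j _ => by ring
  -- Forgetting the `j₀`-th coordinate, which row `i₀` determines, identifies the kernels.
  have hker : Module.finrank K (LinearMap.ker M.mulVecLin)
      = Module.finrank K (LinearMap.ker N.mulVecLin) := by
    let π : (Fin (s + 1) → K) →ₗ[K] (Fin s → K) := LinearMap.funLeft K K j₀.succAbove
    have hπ : ∀ v, π v = fun j => v (j₀.succAbove j) := fun v => rfl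
    let g : LinearMap.ker M.mulVecLin →ₗ[K] LinearMap.ker N.mulVecLin :=
      π.restrict (p := LinearMap.ker M.mulVecLin) (q := LinearMap.ker N.mulVecLin) (by
        intro v hv
        rw [LinearMap.mem_ker, Matrix.mulVecLin_apply] at hv ⊢
        funext i
        rw [hπ, hrel, hv]
        simp)
    refine (LinearEquiv.ofBijective g ⟨?_, ?_⟩).finrank_eq
    · rw [← LinearMap.ker_eq_bot, LinearMap.ker_eq_bot']
      rintro ⟨v, hv⟩ hgv
      have h1 : ∀ j, v (j₀.succAbove j) = 0 := fun j => congrFun (congrArg Subtype.val hgv) j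
      rw [LinearMap.mem_ker, Matrix.mulVecLin_apply] at hv
      have h2 := congrFun hv i₀
      simp only [Matrix.mulVec, dotProduct, Fin.sum_univ_succAbove _ j₀, h1] at h2
      ext j
      rcases Fin.eq_self_or_eq_succAbove j₀ j with rfl | ⟨j, rfl⟩
      · simpa [h] using h2
      · simpa using h1 j
    · rintro ⟨w, hw⟩
      let c : K := -(M i₀ j₀)⁻¹ * ∑ j, M i₀ (j₀.succAbove j) * w j
      let v : Fin (s + 1) → K := j₀.insertNth c w
      have hvw : (fun j => v (j₀.succAbove j)) = w := by
        funext j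
        simp [v]
      have hv0 : (M *ᵥ v) i₀ = 0 := by
        simp only [Matrix.mulVec, dotProduct, Fin.sum_univ_succAbove _ j₀]
        simp only [v, Fin.insertNth_apply_same, Fin.insertNth_apply_succAbove, c]
        field_simp
        ring
      rw [LinearMap.mem_ker, Matrix.mulVecLin_apply] at hw
      refine ⟨⟨v, ?_⟩, Subtype.ext hvw⟩
      rw [LinearMap.mem_ker, Matrix.mulVecLin_apply]
      funext i
      rcases Fin.eq_self_or_eq_succAbove i₀ i with rfl | ⟨i, rfl⟩
      · exact hv0
      · have := hrel v i
        rw [hvw, hw, hv0] at this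
        simpa [h] using this
  simp only [Module.finrank_fin_fun] at hM hN'
  change Module.finrank K (LinearMap.range M.mulVecLin)
    = Module.finrank K (LinearMap.range N.mulVecLin) + 1
  omega

/-- At primes avoiding the pivot, the determinantal locus of `M` agrees with that of the smaller
matrix `pivotComplement M i₀ j₀`, for minors of size one less. -/
theorem minorIdeal_le_iff_pivot {A : Type*} [CommRing A] {s : ℕ} (k : ℕ)
    (M : Matrix (Fin (s + 1)) (Fin (s + 1)) A) (i₀ j₀ : Fin (s + 1)) (Q : Ideal A) [Q.IsPrime]
    (h : M i₀ j₀ ∉ Q) :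
    minorIdeal (k + 2) M ≤ Q ↔ minorIdeal (k + 1) (pivotComplement M i₀ j₀) ≤ Q := by
  have hk : RingHom.ker (algebraMap A Q.ResidueField) = Q := Ideal.ker_algebraMap_residueField Q
  have h1 := minorIdeal_le_ker_iff (algebraMap A Q.ResidueField) (k + 1) M
  have h2 := minorIdeal_le_ker_iff (algebraMap A Q.ResidueField) k (pivotComplement M i₀ j₀)
  have h3 : (pivotComplement M i₀ j₀).map (algebraMap A Q.ResidueField)
      = pivotComplement (M.map (algebraMap A Q.ResidueField)) i₀ j₀ := by
    ext i j
    simp [pivotComplement]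
  rw [hk] at h1 h2
  rw [h1, h2, h3, rank_pivotComplement _ i₀ j₀ (by simpa using h)]
  omega

/-! ### The height of determinantal ideals -/

theorem height_le_height_map_C {A : Type*} [CommRing A] (P : Ideal A) [P.IsPrime] :
    P.height ≤ (P.map (Polynomial.C : A →+* Polynomial A)).height := by
  let g : PrimeSpectrum A → PrimeSpectrum (Polynomial A) := fun p =>
    ⟨p.asIdeal.map Polynomial.C, Ideal.isPrime_map_C_of_isPrime⟩
  have hg : StrictMono g := by
    refine Monotone.strictMono_of_injective (fun p q hpq => Ideal.map_mono hpq) fun p q hpq => ?_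
    ext x
    have h1 : p.asIdeal.map Polynomial.C = q.asIdeal.map Polynomial.C :=
      congrArg PrimeSpectrum.asIdeal hpq
    have h2 : Polynomial.C x ∈ p.asIdeal.map Polynomial.C
      ↔ Polynomial.C x ∈ q.asIdeal.map Polynomial.C := by rw [h1]
    simpa [Ideal.mem_map_C_iff, Polynomial.coeff_C, apply_ite] using h2
  have := Order.height_le_height_apply_of_strictMono g hg ⟨P, inferInstance⟩
  rwa [← PrimeSpectrum.height_eq_orderHeight, ← PrimeSpectrum.height_eq_orderHeight] at this

/-- Inductive step when some entry is outside `P`: as every prime below `P` avoids that entry too,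
`P` remains minimal over the minors of the pivot complement. -/
theorem height_le_of_pivot {A : Type*} [CommRing A] {s k h : ℕ}
    (ih : ∀ (N : Matrix (Fin s) (Fin s) A) (P : Ideal A),
      P ∈ (minorIdeal (k + 1) N).minimalPrimes → P.height ≤ h)
    (M : Matrix (Fin (s + 1)) (Fin (s + 1)) A) (P : Ideal A)
    (hP : P ∈ (minorIdeal (k + 2) M).minimalPrimes) (i₀ j₀ : Fin (s + 1)) (hij : M i₀ j₀ ∉ P) :
    P.height ≤ h := by
  have : P.IsPrime := hP.1.1
  refine ih (pivotComplement M i₀ j₀) P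
    ⟨⟨hP.1.1, (minorIdeal_le_iff_pivot k M i₀ j₀ P hij).1 hP.1.2⟩, ?_⟩
  rintro Q ⟨hQ, hQN⟩ hQP
  exact hP.2 ⟨hQ, (minorIdeal_le_iff_pivot k M i₀ j₀ Q fun h => hij (hQP h)).2 hQN⟩ hQP

/-- The matrix over `A[X]` obtained from `M` by adding `X` to its `(0, 0)` entry. -/
noncomputable def deform {A : Type*} [CommRing A] {s : ℕ}
    (M : Matrix (Fin (s + 1)) (Fin (s + 1)) A) :
    Matrix (Fin (s + 1)) (Fin (s + 1)) (Polynomial A) :=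
  M.map Polynomial.C + Matrix.vecMulVec (Pi.single 0 Polynomial.X) (Pi.single 0 1)

/-- If all entries of `M` lie in `P`, then `P A[X]` is a minimal prime of the minors of `deform M`
of size at least two. A prime `Q` between the two satisfies `Q ≤ P A[X] < P A[X] + (X)`, and the
last ideal is minimal over `Q + (X)`, so Krull's principal ideal theorem forces `Q = P A[X]`. -/
theorem map_C_mem_minimalPrimes_deform {A : Type*} [CommRing A] [IsNoetherianRing A] {s k : ℕ}
    (M : Matrix (Fin (s + 1)) (Fin (s + 1)) A) (P : Ideal A)
    (hP : P ∈ (minorIdeal (k + 2) M).minimalPrimes) (hM : ∀ i j, M i j ∈ P) :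
    P.map Polynomial.C ∈ (minorIdeal (k + 2) (deform M)).minimalPrimes := by
  have hPp : P.IsPrime := hP.1.1
  have hP' : (P.map (Polynomial.C : A →+* Polynomial A)).IsPrime :=
    Ideal.isPrime_map_C_of_isPrime
  refine ⟨⟨hP', ?_⟩, ?_⟩
  · -- Modulo `P A[X]` the deformed matrix has the single entry `X`, so its rank is at most one.
    have hk := Ideal.ker_algebraMap_residueField (P.map (Polynomial.C : A →+* Polynomial A))
    rw [← hk, minorIdeal_le_ker_iff]
    set φ := algebraMap (Polynomial A) (P.map (Polynomial.C : A →+* Polynomial A)).ResidueField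
    have hz : ∀ i j, φ (Polynomial.C (M i j)) = 0 := fun i j => by
      rw [← RingHom.mem_ker, hk]
      exact Ideal.mem_map_of_mem _ (hM i j)
    have : (deform M).map φ = Matrix.vecMulVec (fun i => φ ((Pi.single 0 Polynomial.X : _ → _) i))
        (fun j => φ ((Pi.single 0 1 : _ → _) j)) := by
      ext i j
      simp only [deform, Matrix.map_apply, Matrix.add_apply, map_add, hz, Matrix.vecMulVec_apply,
        map_mul, zero_add]
    rw [this]
    exact (Matrix.rank_vecMulVec_le _ _).trans (by omega)
  · rintro Q ⟨hQ, hQI⟩ hQP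
    -- `m = P A[X] + (X)`
    let m : Ideal (Polynomial A) := P.comap Polynomial.constantCoeff
    have hm : m.IsPrime := Ideal.comap_isPrime _ _
    have hPm : P.map Polynomial.C < m := by
      refine lt_of_le_of_ne (Ideal.map_le_iff_le_comap.2 fun x hx => ?_) fun h => ?_
      · simpa [m, Ideal.mem_comap] using hx
      · have h1 : (Polynomial.X : Polynomial A) ∈ m := by simp [m, Ideal.mem_comap]
        rw [← h, Ideal.mem_map_C_iff] at h1
        exact hPp.ne_top ((Ideal.eq_top_iff_one _).2 (by simpa using h1 1))
    have hdef : (deform M).map Polynomial.constantCoeff = M := by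
      ext i j
      by_cases hi : i = 0 <;> simp [deform, Matrix.vecMulVec_apply, hi]
    have hmin : m ∈ (Q ⊔ Ideal.span {Polynomial.X}).minimalPrimes := by
      refine ⟨⟨hm, sup_le (hQP.trans hPm.le) ?_⟩, ?_⟩
      · rw [Ideal.span_singleton_le_iff_mem]
        simp [m, Ideal.mem_comap]
      rintro q ⟨hq, hQq⟩ hqm
      have hX : (Polynomial.X : Polynomial A) ∈ q :=
        hQq (Ideal.mem_sup_right (Ideal.mem_span_singleton_self _))
      -- As `X ∈ q`, membership in `q` only depends on the constant coefficient.
      have hqc : ∀ g : Polynomial A, g ∈ q ↔ Polynomial.C (Polynomial.constantCoeff g) ∈ q := by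
        intro g
        have h1 : g - Polynomial.C (Polynomial.constantCoeff g) ∈ q := by
          have : Polynomial.X ∣ g - Polynomial.C (Polynomial.constantCoeff g) := by
            rw [Polynomial.X_dvd_iff]
            simp
          exact Ideal.mem_of_dvd _ this hX
        constructor
        · intro hg
          simpa using q.sub_mem hg h1
        · intro hg
          simpa using q.add_mem h1 hg
      have hle : P ≤ q.comap Polynomial.C := by
        refine hP.2 ⟨Ideal.comap_isPrime _ _, ?_⟩ ?_
        · rw [minorIdeal, Ideal.span_le]
          rintro _ ⟨e, rfl⟩
          have h1 : ((deform M).submatrix e.1 e.2).det ∈ q :=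
            hQq (Ideal.mem_sup_left (hQI (Ideal.subset_span ⟨e, rfl⟩)))
          rw [hqc, RingHom.map_det, RingHom.mapMatrix_apply, ← Matrix.submatrix_map, hdef] at h1
          exact h1
        · intro x hx
          have := hqm (Ideal.mem_comap.1 hx)
          simpa [m, Ideal.mem_comap] using this
      intro g hg
      rw [hqc]
      exact hle hg
    have hht := Ideal.map_height_le_one_of_mem_minimalPrimes hmin
    by_contra hne
    have hlt : Q < P.map Polynomial.C := lt_of_le_not_ge hQP hne
    -- A strict inclusion gives a chain `⊥ < P A[X] / Q < m / Q` of length two.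
    have hs : Function.Surjective (Ideal.Quotient.mk Q) := Ideal.Quotient.mk_surjective
    have hcm : ∀ J : Ideal (Polynomial A), Q ≤ J →
        (J.map (Ideal.Quotient.mk Q)).comap (Ideal.Quotient.mk Q) = J := fun J hJ => by
      rw [Ideal.comap_map_of_surjective' _ hs, Ideal.mk_ker, sup_eq_left.2 hJ]
    have hp1 : ((P.map Polynomial.C).map (Ideal.Quotient.mk Q)).IsPrime :=
      Ideal.map_isPrime_of_surjective hs (by rwa [Ideal.mk_ker])
    have hp2 : (m.map (Ideal.Quotient.mk Q)).IsPrime :=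
      Ideal.map_isPrime_of_surjective hs (by rw [Ideal.mk_ker]; exact hQP.trans hPm.le)
    have hlt2 : (P.map Polynomial.C).map (Ideal.Quotient.mk Q) < m.map (Ideal.Quotient.mk Q) := by
      refine lt_of_le_of_ne (Ideal.map_mono hPm.le) fun h => hPm.ne ?_
      rw [← hcm _ hQP, h, hcm _ (hQP.trans hPm.le)]
    have hlt1 : (⊥ : Ideal (Polynomial A ⧸ Q)) < (P.map Polynomial.C).map (Ideal.Quotient.mk Q) := by
      refine lt_of_le_of_ne bot_le fun h => hlt.ne ?_
      rw [← hcm _ hQP, ← h, ← RingHom.ker_eq_comap_bot, Ideal.mk_ker]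
    have e1 := Ideal.height_add_one_le_of_lt_of_isPrime hlt1
    have e2 := Ideal.height_add_one_le_of_lt_of_isPrime hlt2
    have e3 : (0 + 1 + 1 : ℕ∞) ≤ 1 :=
      le_trans (by gcongr; exact le_trans (by gcongr; exact zero_le) e1) (e2.trans hht)
    exact absurd e3 (by decide)

/-- The Eagon–Northcott bound for square matrices: a minimal prime of the ideal of
`(k + 1)`-minors of an `s × s` matrix has height at most `(s - k)²`. -/
theorem height_le_of_mem_minimalPrimes_minorIdeal (k : ℕ) :
    ∀ {A : Type*} [CommRing A] [IsNoetherianRing A] {s : ℕ}, k ≤ s →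
      ∀ (M : Matrix (Fin s) (Fin s) A) (P : Ideal A),
      P ∈ (minorIdeal (k + 1) M).minimalPrimes → P.height ≤ ((s - k) ^ 2 : ℕ) := by
  induction k with
  | zero =>
    intro A _ _ s _ M P hP
    refine (Ideal.height_le_card_of_mem_minimalPrimes_span (Set.finite_range _) hP).trans ?_
    norm_cast
    rw [← Set.image_univ]
    refine (Set.ncard_image_le Set.finite_univ).trans ?_
    simp [Set.ncard_univ, sq]
  | succ k ih =>
    intro A _ _ s hs M P hP
    obtain ⟨s, rfl⟩ : ∃ s', s = s' + 1 := ⟨s - 1, by omega⟩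
    rw [Nat.add_sub_add_right]
    by_cases hM : ∃ i j, M i j ∉ P
    · obtain ⟨i, j, hij⟩ := hM
      exact height_le_of_pivot (ih (by omega)) M P hP i j hij
    · push Not at hM
      have hPp : P.IsPrime := hP.1.1
      refine (height_le_height_map_C P).trans
        (height_le_of_pivot (ih (by omega)) (deform M) _
          (map_C_mem_minimalPrimes_deform M P hP hM) 0 0 fun h => ?_)
      rw [Ideal.mem_map_C_iff] at h
      have := h 1
      simp [deform, Matrix.vecMulVec_apply] at this
      exact hPp.ne_top ((Ideal.eq_top_iff_one _).2 this)

/-! ### Dimension of quotients of polynomial rings -/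

theorem exists_injective_quotient_comap {F B C : Type*} [CommRing F] [CommRing B] [CommRing C]
    [Algebra F B] [Algebra F C] (f : B →ₐ[F] C) (P : Ideal C) (p : Ideal B)
    (h : p = P.comap (f : B →+* C)) : ∃ g : (B ⧸ p) →ₐ[F] (C ⧸ P), Function.Injective g := by
  subst h
  exact ⟨Ideal.quotientMapₐ P f le_rfl,
    Ideal.quotientMap_injective' (f := (f : B →+* C)) (H := le_rfl) le_rfl⟩

/-- In transcendence degree form, `n ≤ ht P + dim F[x₁,…,xₙ]/P`. The induction compares a prime
of `F[x₁,…,xₙ][X]` with the extension of its contraction `p` to `F[x₁,…,xₙ]`: either they agree, and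
the quotient is `(F[x₁,…,xₙ]/p)[X]`, or the height has gone up by at least one. -/
theorem exists_injective_algHom_quotient (F : Type*) [Field F] (n : ℕ) :
    ∀ (P : Ideal (MvPolynomial (Fin n) F)) [P.IsPrime],
      ∃ (t : ℕ) (g : MvPolynomial (Fin t) F →ₐ[F] MvPolynomial (Fin n) F ⧸ P),
        Function.Injective g ∧ (n : ℕ∞) ≤ P.height + t := by
  induction n with
  | zero =>
    intro P hP
    refine ⟨0, Algebra.ofId F _ |>.comp (MvPolynomial.isEmptyAlgEquiv F (Fin 0)).toAlgHom, ?_,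
      by simp⟩
    exact (FaithfulSMul.algebraMap_injective F (MvPolynomial (Fin 0) F ⧸ P)).comp
      (MvPolynomial.isEmptyAlgEquiv F (Fin 0)).injective
  | succ n ih =>
    intro P hP
    let e := MvPolynomial.finSuccEquiv F n
    let P' : Ideal (Polynomial (MvPolynomial (Fin n) F)) :=
      P.comap (e.symm : _ →+* MvPolynomial (Fin (n + 1)) F)
    have hP' : P'.IsPrime := Ideal.comap_isPrime _ _
    have hht : P'.height = P.height := RingEquiv.height_comap e.symm.toRingEquiv P
    obtain ⟨e', he'⟩ := exists_injective_quotient_comap e.symm.toAlgHom P P' rfl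
    let p : Ideal (MvPolynomial (Fin n) F) := P'.comap Polynomial.C
    have hp : p.IsPrime := Ideal.comap_isPrime _ _
    obtain ⟨t, g, hg, hn⟩ := ih p
    have hle : p.map Polynomial.C ≤ P' := Ideal.map_comap_le
    have hpC : (p.map (Polynomial.C : _ →+* Polynomial (MvPolynomial (Fin n) F))).IsPrime :=
      Ideal.isPrime_map_C_of_isPrime
    rcases hle.eq_or_lt with heq | hlt
    · let q : (Polynomial (MvPolynomial (Fin n) F ⧸ p)) →ₐ[F]
          (Polynomial (MvPolynomial (Fin n) F) ⧸ P') :=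
        { ((Ideal.quotEquivOfEq heq).toRingHom.comp
            (Ideal.polynomialQuotientEquivQuotientPolynomial p).toRingHom) with
          commutes' := fun c => by
            have h1 : algebraMap F (Polynomial (MvPolynomial (Fin n) F ⧸ p)) c =
                (algebraMap F (Polynomial (MvPolynomial (Fin n) F)) c).map
                  (Ideal.Quotient.mk p) := by
              rw [Polynomial.algebraMap_apply, Polynomial.algebraMap_apply, Polynomial.map_C]
              rfl
            change Ideal.quotEquivOfEq heq
              (Ideal.polynomialQuotientEquivQuotientPolynomial p _) = _
            rw [h1, Ideal.polynomialQuotientEquivQuotientPolynomial_map_mk]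
            rfl }
      have hq : Function.Injective q :=
        (Ideal.quotEquivOfEq heq).injective.comp
          (Ideal.polynomialQuotientEquivQuotientPolynomial p).injective
      refine ⟨t + 1, e'.comp (q.comp ((Polynomial.mapAlgHom g).comp
        (MvPolynomial.finSuccEquiv F t).toAlgHom)), ?_, ?_⟩
      · exact he'.comp (hq.comp ((Polynomial.map_injective _ hg).comp
          (MvPolynomial.finSuccEquiv F t).injective))
      · have := height_le_height_map_C p
        rw [heq, hht] at this
        push_cast
        rw [← add_assoc]
        gcongr
        exact hn.trans (by gcongr)
    · obtain ⟨j, hj⟩ := exists_injective_quotient_comap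
        (Algebra.algHom F (MvPolynomial (Fin n) F) (Polynomial (MvPolynomial (Fin n) F))) P' p rfl
      refine ⟨t, e'.comp (j.comp g), he'.comp (hj.comp hg), ?_⟩
      have h1 := height_le_height_map_C p
      have h2 := Ideal.height_add_one_le_of_lt_of_isPrime hlt
      rw [hht] at h2
      push_cast
      calc (n : ℕ∞) + 1 ≤ (p.height + t) + 1 := by gcongr
        _ = (p.height + 1) + t := by ring
        _ ≤ P.height + t := by
          gcongr
          exact le_trans (by gcongr) h2

/-- The Krull dimension of a finitely generated domain is at least its transcendence degree, by
Noether normalization and going-up. -/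
theorem natCast_le_ringKrullDim_of_injective {F D : Type*} [Field F] [CommRing D] [IsDomain D]
    [Algebra F D] [Algebra.FiniteType F D] {t : ℕ} (g : MvPolynomial (Fin t) F →ₐ[F] D)
    (hg : Function.Injective g) : (t : WithBot ℕ∞) ≤ ringKrullDim D := by
  obtain ⟨d, i, hi, hint⟩ := exists_integral_inj_algHom_of_fg F D
  algebraize [i.toRingHom]
  have hDi : Algebra.IsIntegral (MvPolynomial (Fin d) F) D := ⟨hint⟩
  have hfs : FaithfulSMul (MvPolynomial (Fin d) F) D := by
    rw [faithfulSMul_iff_algebraMap_injective]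
    exact hi
  have htd : t ≤ d := by
    have h1 := lift_trdeg_le_of_injective g hg
    have h2 := _root_.lift_trdeg_add_eq F (MvPolynomial (Fin d) F) D
    rw [trdeg_eq_zero (R := MvPolynomial (Fin d) F) (A := D)] at h2
    rw [← h2] at h1
    simpa using h1
  have hdim : (d : WithBot ℕ∞) ≤ ringKrullDim D := by
    have hd : ringKrullDim (MvPolynomial (Fin d) F) = d := by
      rw [MvPolynomial.ringKrullDim_of_isNoetherianRing]
      simp
    rw [← hd]
    refine iSup_le fun l => ?_
    obtain ⟨⟨P, hP⟩, hPl⟩ := Algebra.IsIntegral.comap_surjective (MvPolynomial (Fin d) F) D l.head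
    have : P.LiesOver l.head.asIdeal := ⟨by rw [← hPl]; rfl⟩
    obtain ⟨L, hL, -⟩ := Ideal.exists_ltSeries_of_hasGoingUp l P
    rw [← hL]
    exact Order.LTSeries.length_le_krullDim L
  exact le_trans (by exact_mod_cast htd) hdim

/-! ### Derivatives of determinants -/

theorem derivation_prod {F A ι : Type*} [CommRing F] [CommRing A] [Algebra F A] [DecidableEq ι]
    (D : Derivation F A A) (S : Finset ι) (f : ι → A) :
    D (∏ i ∈ S, f i) = ∑ i ∈ S, ∏ j ∈ S, Function.update f i (D (f i)) j := by
  induction S using Finset.induction_on with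
  | empty => simp
  | insert a S ha ih =>
    rw [Finset.prod_insert ha, Derivation.leibniz, ih, Finset.sum_insert ha,
      Finset.prod_insert ha, Function.update_self, smul_eq_mul, smul_eq_mul, Finset.mul_sum, add_comm]
    congr 1
    · rw [mul_comm]
      congr 1
      exact Finset.prod_congr rfl fun j hj =>
        (Function.update_of_ne (ne_of_mem_of_not_mem hj ha) _ _).symm
    · refine Finset.sum_congr rfl fun i hi => ?_
      rw [Finset.prod_insert ha, Function.update_of_ne (ne_of_mem_of_not_mem hi ha).symm]

theorem derivation_det {F A ι : Type*} [CommRing F] [CommRing A] [Algebra F A] [DecidableEq ι]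
    [Fintype ι] (D : Derivation F A A) (N : Matrix ι ι A) :
    D N.det = ∑ i, (N.updateCol i fun k => D (N k i)).det := by
  simp only [Matrix.det_apply, map_sum]
  rw [Finset.sum_comm]
  refine Finset.sum_congr rfl fun σ _ => ?_
  rw [Units.smul_def, map_zsmul, derivation_prod, Finset.smul_sum]
  refine Finset.sum_congr rfl fun i _ => ?_
  rw [Units.smul_def]
  congr 1
  refine Finset.prod_congr rfl fun j _ => ?_
  by_cases h : j = i
  · subst h
    simp
  · simp [h]

theorem rank_add_le {K : Type*} [Field K] {s : ℕ} (M N : Matrix (Fin s) (Fin s) K) :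
    (M + N).rank ≤ M.rank + N.rank := by
  rw [Matrix.rank, Matrix.mulVecLin_add]
  refine le_trans (Submodule.finrank_mono ?_) (Submodule.finrank_add_le_finrank_add_finrank _ _)
  exact LinearMap.range_add_le _ _

theorem rank_updateCol_le {K : Type*} [Field K] {s : ℕ} (N : Matrix (Fin s) (Fin s) K) (i : Fin s)
    (v : Fin s → K) : (N.updateCol i v).rank ≤ N.rank + 1 := by
  have : N.updateCol i v = N + Matrix.vecMulVec (v - N.col i) (Pi.single i 1) := by
    ext a b
    by_cases h : b = i
    · subst h
      simp [Matrix.vecMulVec_apply]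
    · simp [Matrix.vecMulVec_apply, h]
  rw [this]
  exact (rank_add_le _ _).trans (by gcongr; exact Matrix.rank_vecMulVec_le _ _)

theorem iterPderiv_sum {F σ ι : Type*} [Field F] (l : List σ) (S : Finset ι)
    (g : ι → MvPolynomial σ F) : iterPderiv l (∑ i ∈ S, g i) = ∑ i ∈ S, iterPderiv l (g i) := by
  induction l generalizing g with
  | nil => rfl
  | cons v l ih =>
    have hcons : ∀ h : MvPolynomial σ F, iterPderiv (v :: l) h = iterPderiv l (pderiv v h) :=
      fun _ => rfl
    simp only [hcons, map_sum, ih]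

/-- Each differentiation replaces one column at a time, hence raises the rank by at most one, so
that order-`j` derivatives of `det N` vanish wherever `N` has rank less than `s - j`. -/
theorem iterPderiv_det_eq_zero {F K : Type*} [Field F] [Field K] {n s : ℕ}
    (φ : MvPolynomial (Fin n) F →+* K) (l : List (Fin n)) :
    ∀ (N : Matrix (Fin s) (Fin s) (MvPolynomial (Fin n) F)), (N.map φ).rank + l.length < s →
      φ (iterPderiv l N.det) = 0 := by
  induction l with
  | nil =>
    intro N hN
    by_contra h0
    rw [iterPderiv, List.foldl_nil, RingHom.map_det] at h0
    have h1 := Matrix.rank_of_det_ne_zero h0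
    rw [Fintype.card_fin] at h1
    exact absurd hN (by simp [← RingHom.mapMatrix_apply, h1])
  | cons v l ih =>
    intro N hN
    have hcons : iterPderiv (v :: l) N.det = iterPderiv l (pderiv v N.det) := rfl
    rw [hcons, derivation_det, iterPderiv_sum, map_sum]
    refine Finset.sum_eq_zero fun i _ => ih _ ?_
    have h1 := rank_updateCol_le (N.map φ) i (φ ∘ fun k => pderiv v (N k i))
    rw [Matrix.map_updateCol]
    rw [List.length_cons] at hN
    omega

/-- Let `F` be algebraically closed, `r ≥ 1`, and `f` a polynomial with zero constant term
such that the Krull dimension of `F[x]/I_r(f)` — where `I_r(f)` is the ideal generated by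
all partial derivatives of `f` of order at most `r`, including `f` itself — is strictly
less than `n - (r+1)²`. Then for every determinantal representation `M` of `f` of size `s`
(entries of degree at most 1, `det M = f`), the constant part `M(0)` satisfies
`s - r ≤ rank M(0) ≤ s - 1`, i.e. `M` is `r'`-regular for some `r' ≤ r`. -/
theorem determinantal_representation_is_r_regular
    {F : Type*} [Field F] [IsAlgClosed F] {n s r : ℕ} (hr : 1 ≤ r)
    (f : MvPolynomial (Fin n) F)
    (hconst : MvPolynomial.coeff 0 f = 0)
    (hsing : ringKrullDim (MvPolynomial (Fin n) F ⧸
        Ideal.span {g : MvPolynomial (Fin n) F |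
          ∃ l : List (Fin n), l.length ≤ r ∧ g = iterPderiv l f}) + ((r+1)^2 : ℕ)
      < (n : WithBot ℕ∞))
    (M : Matrix (Fin s) (Fin s) (MvPolynomial (Fin n) F))
    (hdeg : ∀ i j, (M i j).totalDegree ≤ 1)
    (hdet : M.det = f) :
    s - r ≤ (Matrix.of fun i j => MvPolynomial.coeff 0 (M i j)).rank ∧
      (Matrix.of fun i j => MvPolynomial.coeff 0 (M i j)).rank ≤ s - 1 := by
  have hcc : (Matrix.of fun i j => MvPolynomial.coeff 0 (M i j))
      = M.map (MvPolynomial.constantCoeff : MvPolynomial (Fin n) F →+* F) := rfl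
  have hdet0 : (M.map (MvPolynomial.constantCoeff : MvPolynomial (Fin n) F →+* F)).det = 0 := by
    rw [← RingHom.mapMatrix_apply, ← RingHom.map_det, hdet]
    exact hconst
  rw [hcc]
  constructor
  · by_contra! hlt
    -- The determinantal locus passes through the origin.
    have hker : minorIdeal (s - r - 1 + 1) M
        ≤ RingHom.ker (MvPolynomial.constantCoeff : MvPolynomial (Fin n) F →+* F) :=
      (minorIdeal_le_ker_iff _ _ M).2 (by omega)
    have hkp : (RingHom.ker
        (MvPolynomial.constantCoeff : MvPolynomial (Fin n) F →+* F)).IsPrime :=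
      RingHom.ker_isPrime _
    obtain ⟨P, hP, -⟩ := Ideal.exists_minimalPrimes_le hker
    have hPp : P.IsPrime := hP.1.1
    have hht := height_le_of_mem_minimalPrimes_minorIdeal (s - r - 1) (by omega) M P hP
    rw [show s - (s - r - 1) = r + 1 by omega] at hht
    have hle : Ideal.span {g : MvPolynomial (Fin n) F |
        ∃ l : List (Fin n), l.length ≤ r ∧ g = iterPderiv l f} ≤ P := by
      rw [Ideal.span_le]
      rintro _ ⟨l, hl, rfl⟩
      have hk : RingHom.ker (algebraMap _ P.ResidueField) = P := Ideal.ker_algebraMap_residueField P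
      have hrank := hP.1.2
      rw [← hk, minorIdeal_le_ker_iff] at hrank
      rw [SetLike.mem_coe, ← hk, RingHom.mem_ker, ← hdet]
      exact iterPderiv_det_eq_zero _ l M (by omega)
    obtain ⟨t, g, hg, hn⟩ := exists_injective_algHom_quotient F n P
    have ht := (natCast_le_ringKrullDim_of_injective g hg).trans
      (ringKrullDim_le_of_surjective (Ideal.Quotient.factor hle)
        (Ideal.Quotient.factor_surjective hle))
    have hn' : n ≤ (r + 1) ^ 2 + t := by
      have := hn.trans (add_le_add_left hht (t : ℕ∞))
      exact_mod_cast this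
    refine absurd hsing (not_lt.2 ?_)
    calc (n : WithBot ℕ∞) ≤ ((t + (r + 1) ^ 2 : ℕ) : WithBot ℕ∞) := by
          exact_mod_cast hn'.trans (add_comm _ _).le
      _ = (t : WithBot ℕ∞) + ((r + 1) ^ 2 : ℕ) := by push_cast; rfl
      _ ≤ _ := add_le_add_left ht _
  · have hne : (M.map (MvPolynomial.constantCoeff : MvPolynomial (Fin n) F →+* F)).rank ≠ s := by
      intro h
      have hu : LinearIndependent F
          (M.map (MvPolynomial.constantCoeff : MvPolynomial (Fin n) F →+* F)).col := by
        rw [linearIndependent_iff_card_eq_finrank_span, Fintype.card_fin, Set.finrank,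
          ← Matrix.rank_eq_finrank_span_cols, h]
      rw [Matrix.linearIndependent_cols_iff_isUnit, Matrix.isUnit_iff_isUnit_det, hdet0] at hu
      exact not_isUnit_zero hu
    have := Matrix.rank_le_width (M.map (MvPolynomial.constantCoeff : MvPolynomial (Fin n) F →+* F))
    omega
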